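/- Let Y → X be a fibred manifold, Γ a connection on Y → X, Γ̂ = Γ ∘ π_{ΠY}: Π → J¹Y its pullback to the Legendre bundle Π over Y, and Γ̃ the lift of Γ to a connection on the fibred Legendre manifold Π → X (constructed with a symmetric linear connection K on TX). Then Γ̃⌋Ω = d(Γ̂⌋θ), where Ω = dp^λ_i ∧ dy^i ∧ ω ⊗ ∂_λ is the multisymplectic form on Π; in particular, the form Γ̃⌋Ω is closed, so Γ̃ is a Hamiltonian connection on Π → X. -/

import Mathlib

/-!
Both sides of `Γ̃⌋Ω = d(Γ̂⌋θ)` equal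
`-∂_jΓ^i_λ p^λ_i dy^j ∧ ω - Γ^i_λ dp^λ_i ∧ ω + dp^λ_i ∧ dy^i ∧ ω_λ` with `ω_λ = ∂_λ⌋ω`.
On the left, the momentum component of `Γ̃` enters only through its trace over the two base
indices, where the two terms containing `K` cancel because `K` is symmetric
(`trace_legLift`). On the right, differentiating the coefficient `p^λ_i` gives the terms with
`dp^λ_i`, which are those of the Laplace expansion of `Ω` along `dp^λ_i` (`wdg_cons_cons`);
differentiating the components of `Γ` gives `dΓ^i_λ ∧ ω`, of which only the part
`∂_jΓ^i_λ dy^j ∧ ω` survives, since `dx^μ ∧ ω = 0` (`wdg_cons_dxF`).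

Closedness follows from `d ∘ d = 0`: the form `Γ̂⌋θ` is smooth with values in continuous
alternating maps (`thetaHat`), and on such forms `extD` is Mathlib's `extDeriv`
(`extD_eq_extDeriv`), so that `extDeriv_extDeriv` applies.
-/

/-!
STATEMENT 14.  Fibred coordinates `(x^λ, y^i)` of a fibred manifold `Y → X`
with `n = dim X`: we work in a chart where `X = (Fin n → ℝ)`, the fibre is
`(Fin k → ℝ)`, and the Legendre bundle `Π = ∧ⁿT*X ⊗_Y TX ⊗_Y V*Y` has fibred
coordinates `(x^λ, y^i, p^λ_i)`, i.e.
`Π = (Fin n → ℝ) × (Fin k → ℝ) × (Fin n → Fin k → ℝ)` (`LM n k` below).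

Differential `r`-forms on `Π` are represented by their evaluation on tuples of
(constant) tangent vectors, `Form n k r = LM n k → (Fin r → LM n k) → ℝ`; for
alternating multilinear such data this faithfully represents forms, wedge
products of coordinate 1-forms being determinants, and the exterior
derivative being the standard formula `extD` below (so a form `φ` is closed
iff `extD φ = 0`).

* `OmegaV` is the multisymplectic form `Ω = dp^λ_i ∧ dy^i ∧ ω ⊗ ∂_λ`,
  a `TX`-valued `(n+2)`-form (its `λ`-component is given);
  `ω = dx¹ ∧ … ∧ dxⁿ`.
* `thetaV` is the canonical multisymplectic Liouville form
  `θ = − p^λ_i dy^i ∧ ω ⊗ ∂_λ` on `Π`, with `dθ = −Ω` componentwise.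
* A connection `γ = dx^λ ⊗ (∂_λ + γ^i_λ ∂_i + γ^μ_{jλ} ∂^j_μ)` on `Π → X` is
  encoded by its horizontal lifts `lift z λ ∈ T_zΠ`; `contr lift Θ = γ⌋Θ` is
  the contraction of a `TX`-valued form `Θ` with `γ`.
* `γ` is a Hamiltonian connection iff `γ⌋Ω` is closed (`IsHamiltonianConn`).
* Given a connection `Γ` on `Y → X` (`Gc (x,y) λ i = Γ^i_λ`) and a symmetric
  linear connection `K` on `TX` (`Kc x μ ν λ = K^μ_{νλ} = K^μ_{λν}`),
  `legLift Gc Kc` is (the horizontal lift of) the lift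
  `Γ̃ = dx^λ ⊗ [∂_λ + Γ^i_λ ∂_i
        + (−∂_jΓ^i_λ p^μ_i − K^μ_{νλ} p^ν_j + K^α_{αλ} p^μ_j) ∂^j_μ]`
  of `Γ` onto the fibred Legendre manifold `Π → X`, and
  `hatLift Gc` is the pullback connection `Γ̂ = Γ ∘ π_{ΠY}`
  (with zero `∂^j_μ`-component), used only through the contraction `Γ̂⌋θ`.

The theorem: `Γ̃⌋Ω = d(Γ̂⌋θ)`; in particular `Γ̃⌋Ω` is closed, so `Γ̃` is a
Hamiltonian connection on `Π → X`.
-/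

/-- The Legendre manifold `Π` in coordinates. -/
abbrev LM (n k : ℕ) := (Fin n → ℝ) × (Fin k → ℝ) × (Fin n → Fin k → ℝ)

/-- `r`-forms on `Π`, as functions of a point and `r` (constant) vectors. -/
abbrev Form (n k r : ℕ) := LM n k → (Fin r → LM n k) → ℝ

/-- Exterior derivative (standard formula on constant frames). -/
noncomputable def extD {n k r : ℕ} (φ : Form n k r) : Form n k (r + 1) :=
  fun z v => ∑ i : Fin (r + 1),
    (-1 : ℝ) ^ (i : ℕ) * fderiv ℝ (fun w => φ w (v ∘ i.succAbove)) z (v i)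

/-- The `λ`-component of `Ω = dp^λ_i ∧ dy^i ∧ ω ⊗ ∂_λ`. -/
noncomputable def OmegaV (n k : ℕ) (lam : Fin n) : Form n k (n + 2) :=
  fun _z v => ∑ i : Fin k,
    Matrix.det (Matrix.of fun a b =>
      (Fin.cons (fun w : LM n k => w.2.2 lam i)
        (Fin.cons (fun w : LM n k => w.2.1 i)
          (fun μ (w : LM n k) => w.1 μ)) : Fin (n + 2) → LM n k → ℝ) a (v b))

/-- The `λ`-component of the Liouville form `θ = −p^λ_i dy^i ∧ ω ⊗ ∂_λ`. -/
noncomputable def thetaV (n k : ℕ) (lam : Fin n) : Form n k (n + 1) :=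
  fun z v => -∑ i : Fin k, z.2.2 lam i *
    Matrix.det (Matrix.of fun a b =>
      (Fin.cons (fun w : LM n k => w.2.1 i)
        (fun μ (w : LM n k) => w.1 μ) : Fin (n + 1) → LM n k → ℝ) a (v b))

/-- Contraction `γ⌋Θ` of a `TX`-valued `(r+1)`-form with a connection given by
its horizontal lifts. -/
noncomputable def contr {n k r : ℕ} (lift : LM n k → Fin n → LM n k)
    (Θ : Fin n → Form n k (r + 1)) : Form n k r :=
  fun z v => ∑ lam : Fin n, Θ lam z (Fin.cons (lift z lam) v)

/-- A connection `γ` on `Π → X` is Hamiltonian iff `γ⌋Ω` is closed. -/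
def IsHamiltonianConn {n k : ℕ} (lift : LM n k → Fin n → LM n k) : Prop :=
  extD (contr lift (OmegaV n k)) = fun _ _ => 0

/-- The horizontal lift of `Γ̃`, the lift of `Γ` onto `Π → X` built with `K`. -/
noncomputable def legLift {n k : ℕ}
    (Gc : (Fin n → ℝ) × (Fin k → ℝ) → Fin n → Fin k → ℝ)
    (Kc : (Fin n → ℝ) → Fin n → Fin n → Fin n → ℝ) :
    LM n k → Fin n → LM n k :=
  fun z lam =>
    (Pi.single lam 1,
     Gc (z.1, z.2.1) lam,
     fun μ j =>
       (-∑ i, fderiv ℝ (fun y => Gc (z.1, y) lam i) z.2.1 (Pi.single j 1) * z.2.2 μ i)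
       - (∑ ν, Kc z.1 μ ν lam * z.2.2 ν j)
       + (∑ α, Kc z.1 α α lam) * z.2.2 μ j)

/-- The horizontal lift of `Γ̂ = Γ ∘ π_{ΠY}`, the pullback of `Γ` onto `Π`. -/
noncomputable def hatLift {n k : ℕ}
    (Gc : (Fin n → ℝ) × (Fin k → ℝ) → Fin n → Fin k → ℝ) :
    LM n k → Fin n → LM n k :=
  fun z lam => (Pi.single lam 1, Gc (z.1, z.2.1) lam, 0)

/-! ### Wedge products of covectors as continuous alternating maps -/

/-- The wedge product `c 0 ∧ ⋯ ∧ c (m - 1)` of covectors, in the determinant normalization. -/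
noncomputable def wdg {E : Type*} [NormedAddCommGroup E] [NormedSpace ℝ E] {m : ℕ}
    (c : Fin m → E →L[ℝ] ℝ) : E [⋀^Fin m]→L[ℝ] ℝ :=
  { (Matrix.detRowAlternating (R := ℝ) (n := Fin m)).compLinearMap
      (LinearMap.pi fun a => (c a : E →ₗ[ℝ] ℝ)) with
    cont := by
      change Continuous fun v : Fin m → E =>
        Matrix.det (Matrix.of fun b a => c a (v b))
      refine Continuous.matrix_det (continuous_matrix fun b a => ?_)
      exact (c a).continuous.comp (continuous_apply b) }

section wdg
variable {E : Type*} [NormedAddCommGroup E] [NormedSpace ℝ E] {m : ℕ}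

lemma wdg_apply (c : Fin m → E →L[ℝ] ℝ) (v : Fin m → E) :
    wdg c v = Matrix.det (Matrix.of fun a b => c a (v b)) := by
  rw [← Matrix.det_transpose]
  rfl

lemma wdg_cons (α : E →L[ℝ] ℝ) (c : Fin m → E →L[ℝ] ℝ) (v : Fin (m + 1) → E) :
    wdg (Fin.cons α c : Fin (m + 1) → E →L[ℝ] ℝ) v
      = ∑ j : Fin (m + 1), (-1) ^ (j : ℕ) * α (v j) * wdg c (v ∘ j.succAbove) := by
  rw [wdg_apply, Matrix.det_succ_row_zero]
  refine Finset.sum_congr rfl fun j _ => ?_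
  rw [wdg_apply]
  rfl

/-- Contraction of `β ∧ c` with `X`: `X⌋(β ∧ c) = β(X) c - β ∧ (X⌋c)`. -/
lemma wdg_cons_cons (β : E →L[ℝ] ℝ) (c : Fin (m + 1) → E →L[ℝ] ℝ) (X : E)
    (v : Fin (m + 1) → E) :
    wdg (Fin.cons β c : Fin (m + 2) → E →L[ℝ] ℝ) (Fin.cons X v)
      = β X * wdg c v
        - ∑ j : Fin (m + 1), (-1) ^ (j : ℕ) * β (v j)
            * wdg c (Fin.cons X (v ∘ j.succAbove)) := by
  rw [wdg_cons, Fin.sum_univ_succ, sub_eq_add_neg, ← Finset.sum_neg_distrib]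
  congr 1
  · simp only [Fin.val_zero, pow_zero, one_mul, Fin.cons_zero]
    congr 2
  · refine Finset.sum_congr rfl fun j _ => ?_
    have h : (Fin.cons X v : Fin (m + 2) → E) ∘ (Fin.succ j).succAbove
        = Fin.cons X (v ∘ j.succAbove) := by
      funext a
      refine Fin.cases ?_ (fun a => ?_) a <;> simp
    rw [h]
    simp only [Fin.val_succ, Fin.cons_succ, pow_succ]
    ring

end wdg

/-! ### Coordinate covectors on the Legendre manifold -/

section coords
variable {n k : ℕ}

/-- The covector `dx^μ`. -/
noncomputable def dxF (μ : Fin n) : LM n k →L[ℝ] ℝ :=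
  (ContinuousLinearMap.proj μ).comp (ContinuousLinearMap.fst ℝ _ _)

/-- The covector `dy^i`. -/
noncomputable def dyF (i : Fin k) : LM n k →L[ℝ] ℝ :=
  (ContinuousLinearMap.proj i).comp
    ((ContinuousLinearMap.fst ℝ _ _).comp (ContinuousLinearMap.snd ℝ _ _))

/-- The covector `dp^λ_i`. -/
noncomputable def dpF (lam : Fin n) (i : Fin k) : LM n k →L[ℝ] ℝ :=
  (ContinuousLinearMap.proj (R := ℝ) (φ := fun _ : Fin k => ℝ) i).comp
    ((ContinuousLinearMap.proj (R := ℝ) (φ := fun _ : Fin n => Fin k → ℝ) lam).comp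
      ((ContinuousLinearMap.snd ℝ _ _).comp (ContinuousLinearMap.snd ℝ _ _)))

@[simp] lemma dxF_apply (μ : Fin n) (w : LM n k) : dxF μ w = w.1 μ := rfl
@[simp] lemma dyF_apply (i : Fin k) (w : LM n k) : dyF i w = w.2.1 i := rfl
@[simp] lemma dpF_apply (lam : Fin n) (i : Fin k) (w : LM n k) : dpF lam i w = w.2.2 lam i := rfl

/-- The form `dy^i ∧ ω`. -/
noncomputable def dyW (n : ℕ) {k : ℕ} (i : Fin k) : LM n k [⋀^Fin (n + 1)]→L[ℝ] ℝ :=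
  wdg (Fin.cons (dyF i) dxF : Fin (n + 1) → LM n k →L[ℝ] ℝ)

lemma OmegaV_eq (lam : Fin n) (z : LM n k) (v : Fin (n + 2) → LM n k) :
    OmegaV n k lam z v = ∑ i : Fin k,
      wdg (Fin.cons (dpF lam i) (Fin.cons (dyF i) dxF) : Fin (n + 2) → LM n k →L[ℝ] ℝ) v := by
  refine Finset.sum_congr rfl fun i _ => ?_
  rw [wdg_apply]
  congr 1
  ext a b
  refine Fin.cases rfl (fun a => ?_) a
  exact Fin.cases rfl (fun a => rfl) a

lemma thetaV_eq (lam : Fin n) (z : LM n k) (v : Fin (n + 1) → LM n k) :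
    thetaV n k lam z v = -∑ i : Fin k, z.2.2 lam i * dyW n i v := by
  unfold thetaV
  congr 1
  refine Finset.sum_congr rfl fun i _ => ?_
  rw [dyW, wdg_apply]
  congr 2
  ext a b
  exact Fin.cases rfl (fun a => rfl) a

/-- `dx^μ ∧ ω = 0`. -/
lemma wdg_cons_dxF (μ : Fin n) (v : Fin (n + 1) → LM n k) :
    wdg (Fin.cons (dxF μ) dxF : Fin (n + 1) → LM n k →L[ℝ] ℝ) v = 0 := by
  rw [wdg_apply]
  exact Matrix.det_zero_of_row_eq (Fin.succ_ne_zero μ).symm rfl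

/-- A vertical vector `Y^j ∂_j` contracts `dy^i ∧ ω` to `Y^i ω`. -/
lemma dyW_vertical (i : Fin k) (Y : Fin k → ℝ) (q : Fin n → Fin k → ℝ) (u : Fin n → LM n k) :
    dyW n i (Fin.cons ((0, Y, q) : LM n k) u)
      = Y i * wdg (dxF : Fin n → LM n k →L[ℝ] ℝ) u := by
  rw [dyW, wdg_apply, Matrix.det_succ_column_zero, Fin.sum_univ_succ, Finset.sum_eq_zero]
  · rw [wdg_apply]
    simp
    exact Or.inl rfl
  · intro μ _
    simp

/-- The form `dy^i ∧ ω` does not see momentum components. -/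
lemma dyW_congr (i : Fin k) {X X' : LM n k} (h1 : X.1 = X'.1) (h2 : X.2.1 = X'.2.1)
    (u : Fin n → LM n k) : dyW n i (Fin.cons X u) = dyW n i (Fin.cons X' u) := by
  rw [dyW, wdg_apply, wdg_apply]
  congr 1
  ext a b
  refine Fin.cases ?_ (fun b => rfl) b
  refine Fin.cases ?_ (fun a => ?_) a
  · simp [h2]
  · simp [h1]

/-- `α ∧ ω = ∑ j, α(∂_j) dy^j ∧ ω` for a covector `α` without `dp`-components. -/
lemma wdg_cons_base (β : (Fin n → ℝ) × (Fin k → ℝ) →L[ℝ] ℝ) (v : Fin (n + 1) → LM n k) :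
    ∑ j : Fin (n + 1), (-1) ^ (j : ℕ) * β ((v j).1, (v j).2.1)
        * wdg (dxF : Fin n → LM n k →L[ℝ] ℝ) (v ∘ j.succAbove)
      = ∑ j : Fin k, β (0, Pi.single j 1) * dyW n j v := by
  have hβ : ∀ (x : Fin n → ℝ) (y : Fin k → ℝ), β (x, y)
      = ∑ μ, x μ * β (Pi.single μ 1, 0) + ∑ j, y j * β (0, Pi.single j 1) := by
    intro x y
    have h1 : β (x, y) = (β.comp (ContinuousLinearMap.inl ℝ _ _)) x
        + (β.comp (ContinuousLinearMap.inr ℝ _ _)) y := by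
      simp [← map_add]
    rw [h1]
    conv_lhs => rw [pi_eq_sum_univ' x, pi_eq_sum_univ' y]
    simp only [map_sum, map_smul, smul_eq_mul]
    rfl
  have hx : ∀ μ : Fin n, ∑ j : Fin (n + 1), (-1) ^ (j : ℕ) * (v j).1 μ
        * wdg (dxF : Fin n → LM n k →L[ℝ] ℝ) (v ∘ j.succAbove) = 0 := fun μ =>
    (wdg_cons (dxF μ) dxF v).symm.trans (wdg_cons_dxF μ v)
  have hy : ∀ i : Fin k, ∑ j : Fin (n + 1), (-1) ^ (j : ℕ) * (v j).2.1 i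
        * wdg (dxF : Fin n → LM n k →L[ℝ] ℝ) (v ∘ j.succAbove) = dyW n i v := fun i =>
    (wdg_cons (dyF i) dxF v).symm
  calc _ = ∑ μ : Fin n, β (Pi.single μ 1, 0) * (∑ j : Fin (n + 1), (-1) ^ (j : ℕ) * (v j).1 μ
              * wdg (dxF : Fin n → LM n k →L[ℝ] ℝ) (v ∘ j.succAbove))
          + ∑ i : Fin k, β (0, Pi.single i 1) * (∑ j : Fin (n + 1), (-1) ^ (j : ℕ) * (v j).2.1 i
              * wdg (dxF : Fin n → LM n k →L[ℝ] ℝ) (v ∘ j.succAbove)) := by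
        simp only [Finset.mul_sum]
        rw [Finset.sum_comm, Finset.sum_comm (s := (Finset.univ : Finset (Fin k))),
          ← Finset.sum_add_distrib]
        refine Finset.sum_congr rfl fun j _ => ?_
        rw [hβ, mul_add, add_mul, Finset.mul_sum, Finset.mul_sum, Finset.sum_mul, Finset.sum_mul]
        congr 1 <;> refine Finset.sum_congr rfl fun a _ => ?_ <;> ring
    _ = _ := by simp only [hx, hy, mul_zero, Finset.sum_const_zero, zero_add]

end coords

/-! ### The form `Γ̂⌋θ` and its exterior derivative -/

section main
variable {n k : ℕ}

/-- The form `Γ̂⌋θ` with values in continuous alternating maps. -/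
noncomputable def thetaHat (Gc : (Fin n → ℝ) × (Fin k → ℝ) → Fin n → Fin k → ℝ) :
    LM n k → LM n k [⋀^Fin n]→L[ℝ] ℝ :=
  fun z => ∑ lam, ∑ i, (-z.2.2 lam i) • (dyW n i).curryLeft (hatLift Gc z lam)

lemma contr_hatLift (Gc : (Fin n → ℝ) × (Fin k → ℝ) → Fin n → Fin k → ℝ) :
    contr (hatLift Gc) (thetaV n k) = fun z v => thetaHat Gc z v := by
  funext z v
  simp only [contr, thetaV_eq, thetaHat, ContinuousAlternatingMap.sum_apply,
    ContinuousAlternatingMap.smul_apply, ContinuousAlternatingMap.curryLeft_apply_apply,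
    smul_eq_mul, neg_mul, Finset.sum_neg_distrib]
  rfl

lemma contDiff_hatLift {Gc : (Fin n → ℝ) × (Fin k → ℝ) → Fin n → Fin k → ℝ}
    (hGc : ContDiff ℝ (⊤ : ℕ∞) Gc) (lam : Fin n) :
    ContDiff ℝ (⊤ : ℕ∞) fun z => hatLift Gc z lam := by
  have h : ContDiff ℝ (⊤ : ℕ∞) fun z : LM n k => Gc (z.1, z.2.1) := by fun_prop
  exact contDiff_const.prodMk ((contDiff_pi.1 h lam).prodMk contDiff_const)

lemma contDiff_thetaHat {Gc : (Fin n → ℝ) × (Fin k → ℝ) → Fin n → Fin k → ℝ}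
    (hGc : ContDiff ℝ (⊤ : ℕ∞) Gc) : ContDiff ℝ (⊤ : ℕ∞) (thetaHat Gc) := by
  refine ContDiff.sum fun lam _ => ContDiff.sum fun i _ => ContDiff.fun_smul ?_ ?_
  · exact (dpF lam i).contDiff.neg
  · exact (dyW n i).curryLeft.contDiff.comp (contDiff_hatLift hGc lam)

lemma extD_eq_extDeriv {r : ℕ} {Φ : LM n k → LM n k [⋀^Fin r]→L[ℝ] ℝ}
    (hΦ : Differentiable ℝ Φ) :
    extD (fun z v => Φ z v) = fun z v => extDeriv Φ z v := by
  funext z v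
  rw [extDeriv_apply (hΦ z)]
  refine Finset.sum_congr rfl fun i _ => ?_
  rw [zsmul_eq_mul]
  push_cast
  rfl

/-- The differential of `w ↦ (Γ̂⌋θ)_w(u)` by the Leibniz rule. -/
lemma fderiv_thetaHat {Gc : (Fin n → ℝ) × (Fin k → ℝ) → Fin n → Fin k → ℝ}
    (hGc : ContDiff ℝ (⊤ : ℕ∞) Gc) (z h : LM n k) (u : Fin n → LM n k) :
    fderiv ℝ (fun w => thetaHat Gc w u) z h
      = ∑ lam, ∑ i, (-(h.2.2 lam i * dyW n i (Fin.cons (hatLift Gc z lam) u))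
          - z.2.2 lam i * (fderiv ℝ Gc (z.1, z.2.1) (h.1, h.2.1) lam i
              * wdg (dxF : Fin n → LM n k →L[ℝ] ℝ) u)) := by
  have hG : HasFDerivAt Gc (fderiv ℝ Gc (z.1, z.2.1)) (z.1, z.2.1) :=
    (hGc.differentiable (by simp) _).hasFDerivAt
  set P : LM n k →L[ℝ] (Fin n → ℝ) × (Fin k → ℝ) :=
    (ContinuousLinearMap.fst ℝ _ _).prod
      ((ContinuousLinearMap.fst ℝ _ _).comp (ContinuousLinearMap.snd ℝ _ _)) with hP
  have hGz : HasFDerivAt (fun w : LM n k => Gc (w.1, w.2.1))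
      ((fderiv ℝ Gc (z.1, z.2.1)).comp P) z :=
    HasFDerivAt.comp z (f := fun w : LM n k => P w) hG P.hasFDerivAt
  have hlift : ∀ lam, HasFDerivAt (fun w => hatLift Gc w lam)
      ((0 : LM n k →L[ℝ] (Fin n → ℝ)).prod
        (((ContinuousLinearMap.proj lam).comp ((fderiv ℝ Gc (z.1, z.2.1)).comp P)).prod
          (0 : LM n k →L[ℝ] (Fin n → Fin k → ℝ)))) z := fun lam =>
    (hasFDerivAt_const _ _).prodMk ((hasFDerivAt_pi'.1 hGz lam).prodMk (hasFDerivAt_const _ _))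
  have hT : ∀ lam i, HasFDerivAt
      (fun w => (-w.2.2 lam i) * dyW n i (Fin.cons (hatLift Gc w lam) u)) _ z := fun lam i =>
    ((dpF lam i).hasFDerivAt (x := z)).fun_neg.fun_mul
      (HasFDerivAt.comp z (g := fun X : LM n k => dyW n i (Fin.cons X u))
        (g' := (ContinuousAlternatingMap.apply ℝ (LM n k) ℝ u).comp (dyW n i).curryLeft)
        (((ContinuousAlternatingMap.apply ℝ (LM n k) ℝ u).comp
          (dyW n i).curryLeft).hasFDerivAt) (hlift lam))
  have hsum := HasFDerivAt.fun_sum (u := Finset.univ) fun lam _ =>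
    HasFDerivAt.fun_sum (u := Finset.univ) fun i _ => hT lam i
  have heq : (fun w => thetaHat Gc w u)
      = fun w => ∑ lam, ∑ i, (-w.2.2 lam i) * dyW n i (Fin.cons (hatLift Gc w lam) u) := by
    funext w
    simp only [thetaHat, ContinuousAlternatingMap.sum_apply,
      ContinuousAlternatingMap.smul_apply, ContinuousAlternatingMap.curryLeft_apply_apply,
      smul_eq_mul]
    rfl
  rw [heq, hsum.fderiv]
  simp only [_root_.sum_apply]
  refine Finset.sum_congr rfl fun lam _ => Finset.sum_congr rfl fun i _ => ?_
  have hv := dyW_vertical i (fderiv ℝ Gc (z.1, z.2.1) (h.1, h.2.1) lam) 0 u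
  rw [← hv]
  change (-z.2.2 lam i)
      * dyW n i (Fin.cons ((0, fderiv ℝ Gc (z.1, z.2.1) (h.1, h.2.1) lam, 0) : LM n k) u)
    + dyW n i (Fin.cons (hatLift Gc z lam) u) * (-h.2.2 lam i) = _
  ring

/-- The vertical derivative of a component of `Γ` as a value of the full derivative. -/
lemma fderiv_vertical {Gc : (Fin n → ℝ) × (Fin k → ℝ) → Fin n → Fin k → ℝ}
    (hGc : ContDiff ℝ (⊤ : ℕ∞) Gc) (x : Fin n → ℝ) (y h : Fin k → ℝ) (lam : Fin n) (i : Fin k) :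
    fderiv ℝ (fun y => Gc (x, y) lam i) y h = fderiv ℝ Gc (x, y) (0, h) lam i := by
  have hG : HasFDerivAt Gc (fderiv ℝ Gc (x, y)) (x, y) :=
    (hGc.differentiable (by simp) _).hasFDerivAt
  have h1 : HasFDerivAt (fun y => Gc (x, y)) _ y :=
    HasFDerivAt.comp y (f := fun y => (x, y)) hG (hasFDerivAt_prodMk_right x y)
  have h2 := hasFDerivAt_pi'.1 (hasFDerivAt_pi'.1 h1 lam) i
  rw [h2.fderiv]
  rfl

/-- In the trace of the momentum components of `Γ̃` the linear connection `K` cancels. -/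
lemma trace_legLift {Gc : (Fin n → ℝ) × (Fin k → ℝ) → Fin n → Fin k → ℝ}
    (hGc : ContDiff ℝ (⊤ : ℕ∞) Gc) {Kc : (Fin n → ℝ) → Fin n → Fin n → Fin n → ℝ}
    (hKsym : ∀ x μ ν lam, Kc x μ ν lam = Kc x μ lam ν) (z : LM n k) (j : Fin k) :
    ∑ lam, (legLift Gc Kc z lam).2.2 lam j
      = -∑ lam, ∑ i, z.2.2 lam i * fderiv ℝ Gc (z.1, z.2.1) (0, Pi.single j 1) lam i := by
  simp only [legLift, fderiv_vertical hGc]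
  rw [Finset.sum_add_distrib, Finset.sum_sub_distrib, Finset.sum_neg_distrib]
  have hK : ∑ lam, ∑ ν, Kc z.1 lam ν lam * z.2.2 ν j
      = ∑ lam, (∑ α, Kc z.1 α α lam) * z.2.2 lam j := by
    rw [Finset.sum_comm]
    refine Finset.sum_congr rfl fun ν _ => ?_
    rw [Finset.sum_mul]
    exact Finset.sum_congr rfl fun α _ => by rw [hKsym]
  rw [hK, sub_add_cancel]
  congr 1
  exact Finset.sum_congr rfl fun lam _ => Finset.sum_congr rfl fun i _ => mul_comm _ _

lemma contr_legLift_eq {Gc : (Fin n → ℝ) × (Fin k → ℝ) → Fin n → Fin k → ℝ}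
    (hGc : ContDiff ℝ (⊤ : ℕ∞) Gc) {Kc : (Fin n → ℝ) → Fin n → Fin n → Fin n → ℝ}
    (hKsym : ∀ x μ ν lam, Kc x μ ν lam = Kc x μ lam ν) :
    contr (legLift Gc Kc) (OmegaV n k) = extD (contr (hatLift Gc) (thetaV n k)) := by
  rw [contr_hatLift]
  funext z v
  have hR : extD (fun z v => thetaHat Gc z v) z v
      = -∑ lam, ∑ i, z.2.2 lam i * (∑ j, fderiv ℝ Gc (z.1, z.2.1) (0, Pi.single j 1) lam i
          * dyW n j v)
        - ∑ lam, ∑ i, ∑ j : Fin (n + 1), (-1) ^ (j : ℕ) * (v j).2.2 lam i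
            * dyW n i (Fin.cons (hatLift Gc z lam) (v ∘ j.succAbove)) := by
    have hb : ∀ lam i, ∑ j, fderiv ℝ Gc (z.1, z.2.1) (0, Pi.single j 1) lam i * dyW n j v
        = ∑ j : Fin (n + 1), (-1) ^ (j : ℕ)
          * fderiv ℝ Gc (z.1, z.2.1) ((v j).1, (v j).2.1) lam i
          * wdg (dxF : Fin n → LM n k →L[ℝ] ℝ) (v ∘ j.succAbove) := fun lam i =>
      (wdg_cons_base ((ContinuousLinearMap.proj (R := ℝ) (φ := fun _ : Fin k => ℝ) i).comp
        ((ContinuousLinearMap.proj (R := ℝ) (φ := fun _ : Fin n => Fin k → ℝ) lam).comp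
          (fderiv ℝ Gc (z.1, z.2.1)))) v).symm
    simp only [hb]
    simp only [extD, fderiv_thetaHat hGc, Finset.mul_sum]
    rw [Finset.sum_comm, ← Finset.sum_neg_distrib, ← Finset.sum_sub_distrib]
    refine Finset.sum_congr rfl fun lam _ => ?_
    rw [Finset.sum_comm, ← Finset.sum_neg_distrib, ← Finset.sum_sub_distrib]
    refine Finset.sum_congr rfl fun i _ => ?_
    rw [← Finset.sum_neg_distrib, ← Finset.sum_sub_distrib]
    refine Finset.sum_congr rfl fun j _ => ?_
    ring
  have hL : contr (legLift Gc Kc) (OmegaV n k) z v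
      = ∑ i, (∑ lam, (legLift Gc Kc z lam).2.2 lam i) * dyW n i v
        - ∑ lam, ∑ i, ∑ j : Fin (n + 1), (-1) ^ (j : ℕ) * (v j).2.2 lam i
            * dyW n i (Fin.cons (hatLift Gc z lam) (v ∘ j.succAbove)) := by
    simp only [contr, OmegaV_eq, wdg_cons_cons, Finset.sum_mul]
    rw [Finset.sum_comm (s := (Finset.univ : Finset (Fin k))), ← Finset.sum_sub_distrib]
    refine Finset.sum_congr rfl fun lam _ => ?_
    rw [← Finset.sum_sub_distrib]
    refine Finset.sum_congr rfl fun i _ => ?_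
    congr 1
    refine Finset.sum_congr rfl fun j _ => ?_
    congr 1
    exact dyW_congr i (X := legLift Gc Kc z lam) (X' := hatLift Gc z lam) rfl rfl _
  rw [hL, hR]
  congr 1
  simp only [trace_legLift hGc hKsym, neg_mul, Finset.sum_neg_distrib, Finset.sum_mul,
    Finset.mul_sum]
  congr 1
  rw [Finset.sum_comm]
  refine Finset.sum_congr rfl fun lam _ => ?_
  rw [Finset.sum_comm]
  exact Finset.sum_congr rfl fun i _ => Finset.sum_congr rfl fun j _ => mul_assoc _ _ _

end main

theorem stmt14 {n k : ℕ}
    (Gc : (Fin n → ℝ) × (Fin k → ℝ) → Fin n → Fin k → ℝ) (hGc : ContDiff ℝ (⊤ : ℕ∞) Gc)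
    (Kc : (Fin n → ℝ) → Fin n → Fin n → Fin n → ℝ) (hKc : ContDiff ℝ (⊤ : ℕ∞) Kc)
    (hKsym : ∀ x μ ν lam, Kc x μ ν lam = Kc x μ lam ν) :
    -- Γ̃⌋Ω = d(Γ̂⌋θ) ...
    contr (legLift Gc Kc) (OmegaV n k) = extD (contr (hatLift Gc) (thetaV n k)) ∧
    -- ... hence Γ̃⌋Ω is closed, i.e. Γ̃ is a Hamiltonian connection on Π → X:
    IsHamiltonianConn (legLift Gc Kc) := by
  have h := contr_legLift_eq hGc hKsym
  refine ⟨h, ?_⟩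
  have hΦ : ContDiff ℝ (⊤ : ℕ∞) (thetaHat Gc) := contDiff_thetaHat hGc
  have hd : ContDiff ℝ (⊤ : ℕ∞) (extDeriv (thetaHat Gc)) :=
    (ContinuousAlternatingMap.alternatizeUncurryFinCLM ℝ (LM n k) ℝ).contDiff.comp
      (hΦ.fderiv_right (by simp))
  rw [IsHamiltonianConn, h, contr_hatLift, extD_eq_extDeriv (hΦ.differentiable (by simp)),
    extD_eq_extDeriv (hd.differentiable (by simp)),
    extDeriv_extDeriv hΦ (by
      rw [minSmoothness_of_isRCLikeNormedField]
      exact WithTop.coe_le_coe.2 (le_top (a := (2 : ℕ∞))))]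
  rfl
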